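/- arXiv:2502.05068 — 3 statements merged into one kernel-verified Lean document; each statement's English description precedes it below -/
import Mathlib

section
/- Walk-sum representation of the resolvent: Let V be a finite nonempty index set and A a Metzler real matrix indexed by V with A_{σ,σ} ≤ 0 for all σ, admitting a Perron root λ* (λ* is an eigenvalue of A and every complex eigenvalue of A has real part at most λ*). Let α be a real number with α > λ* and α > 0. Then α·1 − A is invertible, and for all σ, σ' ∈ V the extended-real sum over all finite sequences σ = σ₁, σ₂, …, σ_ℓ = σ' (ℓ ≥ 1, consecutive entries distinct) of ∏_{k=1}^{ℓ−1} A_{σ_{k+1},σ_k}/(α − A_{σ_k,σ_k}), multiplied by 1/(α − A_{σ',σ'}), equals ENNReal.ofReal( ((α·1 − A)⁻¹)_{σ',σ} ). -/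
open scoped ENNReal

/-- The weight of a finite path, as the product (in `[0,∞]`) of the
`ENNReal.ofReal`-weights of its consecutive pairs. The empty product is `1`. -/
noncomputable def pathWeight {V : Type*} (w : V → V → ℝ) : List V → ℝ≥0∞
  | [] => 1
  | [_] => 1
  | a :: b :: l => ENNReal.ofReal (w a b) * pathWeight w (b :: l)

/-- `l` is a walk from `σ` to `σ'`: a nonempty finite sequence starting at `σ`,
ending at `σ'`, with consecutive entries distinct. -/
def IsWalk {V : Type*} (σ σ' : V) (l : List V) : Prop :=
  l ≠ [] ∧ l.head? = some σ ∧ l.getLast? = some σ' ∧ l.Chain' (· ≠ ·)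

/-- A complex number `μ` is an eigenvalue of the real matrix `M`
(via its complexification). -/
def Matrix.IsComplexEigenvalue {V : Type*} [Fintype V] (M : Matrix V V ℝ) (μ : ℂ) : Prop :=
  ∃ v : V → ℂ, v ≠ 0 ∧ (M.map (Complex.ofReal)).mulVec v = μ • v

/-- `lam` is the Perron root (Lyapunov exponent) of `A`. -/
def Matrix.IsPerronRoot {V : Type*} [Fintype V] (A : Matrix V V ℝ) (lam : ℝ) : Prop :=
  (∃ v : V → ℝ, v ≠ 0 ∧ A.mulVec v = lam • v) ∧
  ∀ μ : ℂ, A.IsComplexEigenvalue μ → μ.re ≤ lam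

/-- `A` is a Metzler matrix: all off-diagonal entries are nonnegative. -/
def Matrix.IsMetzler {V : Type*} (A : Matrix V V ℝ) : Prop :=
  ∀ σ σ' : V, σ ≠ σ' → 0 ≤ A σ' σ

/-!
As `β` decreases from `∞` to `α` without meeting the spectrum, the row vector `1 (β - A)⁻¹` moves
continuously, starts out positive, and cannot become nonnegative with a vanishing entry since the
off-diagonal entries of `A` are nonnegative. Hence `u = 1 (α - A)⁻¹` is positive, which already
forces `A x x < α`. Decomposing walks at their first step, the walk sums to `σ'`, scaled by
`1 / (α - A σ' σ')`, are the minimal solution in `[0, ∞]` of a linear system of which `u` is a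
finite supersolution. They are therefore finite, the system reads `g (α - A) = e_{σ'}`, and `g` is
the row `σ'` of the resolvent.
-/

open scoped Matrix

section TrajectorySums

variable {V : Type*}

/-- The weight of the trajectory `σ :: l` under the kernel `p`, with a charge `f` at its last
vertex. Only the tail `l` is an argument, so that sums over trajectories issued from `σ` range over
all lists. -/
noncomputable def trajectoryWeight (p : V → V → ℝ≥0∞) (f : V → ℝ≥0∞) : V → List V → ℝ≥0∞
  | σ, [] => f σ
  | σ, y :: l => p σ y * trajectoryWeight p f y l

/-- The potential `∑ₙ pⁿ f` of the charge `f` under the kernel `p`, expanded into a sum over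
trajectories. -/
noncomputable def potential (p : V → V → ℝ≥0∞) (f : V → ℝ≥0∞) (σ : V) : ℝ≥0∞ :=
  ∑' l, trajectoryWeight p f σ l

theorem tsum_list_eq_nil_add_tsum_cons (F : List V → ℝ≥0∞) :
    ∑' l, F l = F [] + ∑' y, ∑' l, F (y :: l) := by
  have hcons : Function.Injective fun q : V × List V => q.1 :: q.2 := by
    rintro ⟨a, l⟩ ⟨b, m⟩ h
    simpa only [List.cons.injEq, Prod.mk.injEq] using h
  rw [ENNReal.tsum_eq_add_tsum_ite [], ← hcons.tsum_eq,
    ← ENNReal.tsum_prod (f := fun y l => F (y :: l))]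
  · simp only [reduceCtorEq, if_false]
  · intro l hl
    cases l with
    | nil => simp at hl
    | cons a l => exact ⟨(a, l), rfl⟩

theorem potential_eq_add_tsum (p : V → V → ℝ≥0∞) (f : V → ℝ≥0∞) (σ : V) :
    potential p f σ = f σ + ∑' y, p σ y * potential p f y := by
  simp only [potential, tsum_list_eq_nil_add_tsum_cons (trajectoryWeight p f σ), trajectoryWeight,
    ENNReal.tsum_mul_left]

theorem tsum_trajectoryWeight_length_lt_le {p : V → V → ℝ≥0∞} {f u : V → ℝ≥0∞}
    (hu : ∀ x, f x + ∑' y, p x y * u y ≤ u x) (n : ℕ) (σ : V) :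
    ∑' l : List V, (if l.length < n then trajectoryWeight p f σ l else 0) ≤ u σ := by
  induction n generalizing σ with
  | zero => simp
  | succ n ih =>
    calc ∑' l : List V, (if l.length < n + 1 then trajectoryWeight p f σ l else 0)
        = f σ + ∑' y, p σ y *
            ∑' l : List V, (if l.length < n then trajectoryWeight p f y l else 0) := by
          rw [tsum_list_eq_nil_add_tsum_cons]
          simp [trajectoryWeight, ← ENNReal.tsum_mul_left]
      _ ≤ f σ + ∑' y, p σ y * u y := by gcongr with y; exact ih y
      _ ≤ u σ := hu σ

theorem potential_le_of_supersolution {p : V → V → ℝ≥0∞} {f u : V → ℝ≥0∞}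
    (hu : ∀ x, f x + ∑' y, p x y * u y ≤ u x) (σ : V) : potential p f σ ≤ u σ := by
  refine ENNReal.summable.tsum_le_of_sum_le fun s => ?_
  calc ∑ l ∈ s, trajectoryWeight p f σ l
      = ∑ l ∈ s, (if l.length < s.sup List.length + 1 then trajectoryWeight p f σ l else 0) :=
        Finset.sum_congr rfl fun l hl => (if_pos (Nat.lt_succ_of_le (Finset.le_sup hl))).symm
    _ ≤ ∑' l : List V, (if l.length < s.sup List.length + 1 then trajectoryWeight p f σ l else 0) :=
        ENNReal.sum_le_tsum s
    _ ≤ u σ := tsum_trajectoryWeight_length_lt_le hu _ σ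

end TrajectorySums

section Walks

variable {V : Type*}

theorem isWalk_iff_isChain {σ σ' : V} {l : List V} :
    IsWalk σ σ' l ↔ l.head? = some σ ∧ l.getLast? = some σ' ∧ l.IsChain (· ≠ ·) := by
  refine ⟨And.right, fun h => ⟨?_, h⟩⟩
  rintro rfl
  simp at h

theorem isWalk_singleton_iff {σ σ' : V} : IsWalk σ σ' [σ] ↔ σ = σ' := by
  simp [isWalk_iff_isChain]

theorem isWalk_cons_cons_iff {σ σ' y : V} {l : List V} :
    IsWalk σ σ' (σ :: y :: l) ↔ σ ≠ y ∧ IsWalk y σ' (y :: l) := by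
  simp only [isWalk_iff_isChain, List.isChain_cons_cons, List.head?_cons, List.getLast?_cons_cons]
  tauto

theorem IsWalk.mem_range_cons {σ σ' : V} {l : List V} (h : IsWalk σ σ' l) :
    l ∈ Set.range (List.cons σ) := by
  obtain ⟨tail, rfl⟩ := List.head?_eq_some_iff.1 h.2.1
  exact ⟨tail, rfl⟩

variable [DecidableEq V]

/-- The kernel in `[0, ∞]` with weights `w`, without the loops `x → x`, which walks exclude. -/
noncomputable def looplessKernel (w : V → V → ℝ) (x y : V) : ℝ≥0∞ :=
  if x = y then 0 else ENNReal.ofReal (w x y)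

theorem trajectoryWeight_looplessKernel_single (w : V → V → ℝ) (c : ℝ≥0∞) (σ σ' : V)
    (l : List V) :
    trajectoryWeight (looplessKernel w) (Pi.single σ' c) σ l =
      {l | IsWalk σ σ' l}.indicator (pathWeight w) (σ :: l) * c := by
  classical
  simp only [Set.indicator_apply, Set.mem_ofPred_eq]
  induction l generalizing σ with
  | nil => simp [trajectoryWeight, isWalk_singleton_iff, pathWeight, Pi.single_apply]
  | cons y l ih =>
    rw [trajectoryWeight, ih, looplessKernel, pathWeight]
    by_cases h : σ = y <;> simp [isWalk_cons_cons_iff, h, mul_assoc]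

theorem tsum_isWalk_pathWeight_mul (w : V → V → ℝ) (c : ℝ≥0∞) (σ σ' : V) :
    (∑' l : {l : List V // IsWalk σ σ' l}, pathWeight w l.1) * c =
      potential (looplessKernel w) (Pi.single σ' c) σ := by
  have hsupport : Function.support ({l | IsWalk σ σ' l}.indicator (pathWeight w)) ⊆
      Set.range (List.cons σ) :=
    fun _ hl => (Set.mem_of_indicator_ne_zero hl).mem_range_cons
  calc (∑' l : {l : List V // IsWalk σ σ' l}, pathWeight w l.1) * c
      = (∑' l, {l | IsWalk σ σ' l}.indicator (pathWeight w) l) * c :=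
        congrArg (· * c) (tsum_subtype {l | IsWalk σ σ' l} (pathWeight w))
    _ = (∑' l, {l | IsWalk σ σ' l}.indicator (pathWeight w) (σ :: l)) * c := by
        rw [List.cons_injective.tsum_eq hsupport]
    _ = potential (looplessKernel w) (Pi.single σ' c) σ := by
        simp only [potential, trajectoryWeight_looplessKernel_single, ENNReal.tsum_mul_right]

end Walks

theorem vecMul_smul_one_sub_apply {V R : Type*} [Fintype V] [DecidableEq V] [CommRing R]
    (A : Matrix V V R) (β : R) (v : V → R) (x : V) :
    (v ᵥ* (β • 1 - A)) x = v x * (β - A x x) - ∑ y ∈ {x}ᶜ, v y * A y x := by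
  have hsplit : (v ᵥ* A) x = v x * A x x + ∑ y ∈ {x}ᶜ, v y * A y x :=
    Fintype.sum_eq_add_sum_compl x _
  rw [Matrix.vecMul_sub, Matrix.vecMul_smul, Matrix.vecMul_one, Pi.sub_apply, hsplit,
    Pi.smul_apply, smul_eq_mul]
  ring

theorem forall_pos_of_isPreconnected {X ι : Type*} [TopologicalSpace X] [Finite ι] {s : Set X}
    {F : X → ι → ℝ} (hs : IsPreconnected s) (hF : ContinuousOn F s)
    (hpos : ∀ x ∈ s, 0 ≤ F x → ∀ i, 0 < F x i) {a b : X} (ha : a ∈ s) (hFa : 0 ≤ F a)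
    (hb : b ∈ s) (i : ι) : 0 < F b i := by
  have hopen : IsOpen {v : ι → ℝ | ∀ i, 0 < v i} := by
    simpa only [Set.pi, Set.mem_univ, true_imp_iff, Set.mem_Ioi] using
      isOpen_set_pi Set.finite_univ fun (_ : ι) _ => isOpen_Ioi (a := (0 : ℝ))
  have hclosure : closure {v : ι → ℝ | ∀ i, 0 < v i} ⊆ Set.Ici 0 :=
    closure_minimal (fun v hv i => (hv i).le) isClosed_Ici
  refine (hs.image F hF).subset_of_closure_inter_subset hopen
    ⟨F a, ⟨a, ha, rfl⟩, hpos a ha hFa⟩ ?_ ⟨b, hb, rfl⟩ i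
  rintro _ ⟨hv, x, hx, rfl⟩
  exact hpos x hx (hclosure hv)

section Metzler

variable {V : Type*} [Fintype V] [DecidableEq V] {A : Matrix V V ℝ}

theorem isUnit_smul_one_sub_of_forall_spectrum_lt {α β : ℝ} (hα : ∀ μ ∈ spectrum ℝ A, μ < α)
    (hβ : α ≤ β) : IsUnit (β • 1 - A) := by
  rw [← Algebra.algebraMap_eq_smul_one, ← spectrum.notMem_iff]
  exact fun hmem => (hα β hmem).not_ge hβ

theorem Matrix.IsMetzler.mul_diag_pos_of_nonneg (hA : A.IsMetzler) {β : ℝ} {v : V → ℝ}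
    (hv : 0 ≤ v) {x : V} (hx : 0 < (v ᵥ* (β • 1 - A)) x) : 0 < v x * (β - A x x) := by
  rw [vecMul_smul_one_sub_apply, sub_pos] at hx
  refine hx.trans_le' (Finset.sum_nonneg fun y hy => mul_nonneg (hv y) (hA x y ?_))
  simpa [eq_comm] using hy

theorem Matrix.IsMetzler.pos_of_nonneg (hA : A.IsMetzler) {β : ℝ} {v : V → ℝ} (hv : 0 ≤ v)
    {x : V} (hx : 0 < (v ᵥ* (β • 1 - A)) x) : 0 < v x :=
  (hv x).lt_of_ne' (left_ne_zero_of_mul (hA.mul_diag_pos_of_nonneg hv hx).ne')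

theorem Matrix.IsMetzler.nonneg_of_forall_col_sum_lt (hA : A.IsMetzler) {β : ℝ}
    (hβ : ∀ x, ∑ y, A y x < β) {v : V → ℝ} (hv : 0 ≤ v ᵥ* (β • 1 - A)) : 0 ≤ v := by
  intro x₀
  obtain ⟨x, -, hmin⟩ := Finset.exists_min_image Finset.univ v ⟨x₀, Finset.mem_univ x₀⟩
  refine le_trans ?_ (hmin x₀ (Finset.mem_univ x₀))
  have hoff : ∑ y ∈ {x}ᶜ, v x * A y x ≤ ∑ y ∈ {x}ᶜ, v y * A y x := by
    refine Finset.sum_le_sum fun y hy =>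
      mul_le_mul_of_nonneg_right (hmin y (Finset.mem_univ y)) (hA x y ?_)
    simpa [eq_comm] using hy
  have hmul : 0 ≤ v x * (β - ∑ y, A y x) := by
    have hx := hv x
    rw [Pi.zero_apply, vecMul_smul_one_sub_apply] at hx
    rw [Fintype.sum_eq_add_sum_compl x, ← sub_sub, mul_sub, Finset.mul_sum]
    linarith
  exact nonneg_of_mul_nonneg_left hmul (sub_pos.2 (hβ x))

theorem Matrix.IsMetzler.vecMul_inv_pos (hA : A.IsMetzler) {α : ℝ}
    (hα : ∀ μ ∈ spectrum ℝ A, μ < α) {b : V → ℝ} (hb : ∀ x, 0 < b x) (x : V) :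
    0 < (b ᵥ* (α • 1 - A)⁻¹) x := by
  have hdet {β : ℝ} (hβ : α ≤ β) : IsUnit (β • 1 - A).det :=
    (Matrix.isUnit_iff_isUnit_det _).1 (isUnit_smul_one_sub_of_forall_spectrum_lt hα hβ)
  have hsol {β : ℝ} (hβ : α ≤ β) : (b ᵥ* (β • 1 - A)⁻¹) ᵥ* (β • 1 - A) = b := by
    rw [Matrix.vecMul_vecMul, Matrix.nonsing_inv_mul _ (hdet hβ), Matrix.vecMul_one]
  have hcont : ContinuousOn (fun β : ℝ => b ᵥ* (β • 1 - A)⁻¹) (Set.Ici α) := by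
    intro β hβ
    have hinv : ContinuousAt Inv.inv (β • 1 - A) := continuousAt_matrix_inv _ <| by
      simpa only [Ring.inverse_eq_inv'] using continuousAt_inv₀ (hdet hβ).ne_zero
    have hshift : Continuous fun β : ℝ => β • 1 - A := by fun_prop
    have hvec : Continuous fun M : Matrix V V ℝ => b ᵥ* M :=
      continuous_const.matrix_vecMul continuous_id
    have hcomp := hinv.comp (f := fun β : ℝ => β • 1 - A) hshift.continuousAt
    exact (hvec.continuousAt.comp hcomp).continuousWithinAt
  obtain ⟨β, hαβ, hβ⟩ : ∃ β, α ≤ β ∧ ∀ x, ∑ y, A y x < β :=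
    ((Filter.eventually_ge_atTop α).and
      (Filter.eventually_all.2 fun _ => Filter.eventually_gt_atTop _)).exists
  have hstart : 0 ≤ b ᵥ* (β • 1 - A)⁻¹ :=
    hA.nonneg_of_forall_col_sum_lt hβ ((hsol hαβ).symm ▸ fun x => (hb x).le)
  have hpropagate : ∀ γ ∈ Set.Ici α, 0 ≤ b ᵥ* (γ • 1 - A)⁻¹ →
      ∀ x, 0 < (b ᵥ* (γ • 1 - A)⁻¹) x := fun γ hγ hnonneg x =>
    hA.pos_of_nonneg (β := γ) hnonneg ((hsol hγ).symm ▸ hb x)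
  exact forall_pos_of_isPreconnected isPreconnected_Ici hcont hpropagate hαβ hstart
    Set.self_mem_Ici x

theorem Matrix.IsMetzler.diag_lt (hA : A.IsMetzler) {α : ℝ} {u : V → ℝ} (hu : 0 ≤ u) {x : V}
    (hx : 0 < (u ᵥ* (α • 1 - A)) x) : A x x < α :=
  sub_pos.1 (pos_of_mul_pos_right (hA.mul_diag_pos_of_nonneg hu hx) (hu x))

theorem Matrix.IsPerronRoot.le_of_mem_spectrum {lam : ℝ} (h : A.IsPerronRoot lam) {μ : ℝ}
    (hμ : μ ∈ spectrum ℝ A) : μ ≤ lam := by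
  rw [spectrum.mem_iff, Algebra.algebraMap_eq_smul_one, Matrix.isUnit_iff_isUnit_det,
    isUnit_iff_ne_zero, not_not, ← Matrix.exists_mulVec_eq_zero_iff] at hμ
  obtain ⟨v, hv, hker⟩ := hμ
  rw [Matrix.sub_mulVec, Matrix.smul_mulVec, Matrix.one_mulVec, sub_eq_zero] at hker
  refine h.2 μ ⟨Complex.ofReal ∘ v, fun h0 => hv ?_, ?_⟩
  · exact funext fun x => Complex.ofReal_eq_zero.1 (congrFun h0 x)
  · funext x
    have hx := Complex.ofRealHom.map_mulVec A v x
    rw [← hker, Pi.smul_apply, smul_eq_mul, Complex.ofRealHom_eq_coe, Complex.ofReal_mul] at hx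
    exact hx.symm

end Metzler

section TransitionWeights

variable {V : Type*}

/-- The weights `w(α)_{x → y} = A y x / (α - A x x)` of the jumps `x → y`. -/
noncomputable def transitionWeight (A : Matrix V V ℝ) (α : ℝ) (x y : V) : ℝ :=
  A y x / (α - A x x)

variable [Fintype V] [DecidableEq V] {A : Matrix V V ℝ} {α : ℝ}

theorem ofReal_add_tsum_transitionWeight (hA : A.IsMetzler) {x : V} (hx : A x x < α)
    {v : V → ℝ} (hv : 0 ≤ v) {c : ℝ} (hc : 0 ≤ c) :
    ENNReal.ofReal (c / (α - A x x)) +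
        ∑' y, looplessKernel (transitionWeight A α) x y * ENNReal.ofReal (v y) =
      ENNReal.ofReal ((c + ∑ y ∈ {x}ᶜ, v y * A y x) / (α - A x x)) := by
  have hD : 0 < α - A x x := sub_pos.2 hx
  have hoff {y : V} (hy : y ∈ ({x} : Finset V)ᶜ) : x ≠ y := by simpa [eq_comm] using hy
  have hterm (y : V) (hy : y ∈ ({x} : Finset V)ᶜ) : 0 ≤ v y * A y x :=
    mul_nonneg (hv y) (hA x y (hoff hy))
  rw [add_div, Finset.sum_div, ENNReal.ofReal_add (by positivity)
    (Finset.sum_nonneg fun y hy => div_nonneg (hterm y hy) hD.le),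
    ENNReal.ofReal_sum_of_nonneg fun y hy => div_nonneg (hterm y hy) hD.le, tsum_fintype,
    Fintype.sum_eq_add_sum_compl x, looplessKernel, if_pos rfl, zero_mul, zero_add]
  congr 1
  refine Finset.sum_congr rfl fun y hy => ?_
  rw [looplessKernel, if_neg (hoff hy), transitionWeight,
    ← ENNReal.ofReal_mul (div_nonneg (hA x y (hoff hy)) hD.le), mul_comm, mul_div_assoc]

theorem ofReal_add_tsum_transitionWeight_le_iff (hA : A.IsMetzler) {x : V} (hx : A x x < α)
    {v : V → ℝ} (hv : 0 ≤ v) {c : ℝ} (hc : 0 ≤ c) :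
    ENNReal.ofReal (c / (α - A x x)) +
        ∑' y, looplessKernel (transitionWeight A α) x y * ENNReal.ofReal (v y) ≤
      ENNReal.ofReal (v x) ↔ c ≤ (v ᵥ* (α • 1 - A)) x := by
  rw [ofReal_add_tsum_transitionWeight hA hx hv hc, ENNReal.ofReal_le_ofReal_iff (hv x),
    div_le_iff₀ (sub_pos.2 hx), vecMul_smul_one_sub_apply, le_sub_iff_add_le]

theorem ofReal_add_tsum_transitionWeight_eq_iff (hA : A.IsMetzler) {x : V} (hx : A x x < α)
    {v : V → ℝ} (hv : 0 ≤ v) {c : ℝ} (hc : 0 ≤ c) :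
    ENNReal.ofReal (c / (α - A x x)) +
        ∑' y, looplessKernel (transitionWeight A α) x y * ENNReal.ofReal (v y) =
      ENNReal.ofReal (v x) ↔ c = (v ᵥ* (α • 1 - A)) x := by
  have hD : 0 < α - A x x := sub_pos.2 hx
  have hsum : 0 ≤ ∑ y ∈ {x}ᶜ, v y * A y x := Finset.sum_nonneg fun y hy =>
    mul_nonneg (hv y) (hA x y (by simpa [eq_comm] using hy))
  rw [ofReal_add_tsum_transitionWeight hA hx hv hc,
    ENNReal.ofReal_eq_ofReal_iff (by positivity) (hv x), div_eq_iff hD.ne',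
    vecMul_smul_one_sub_apply, eq_sub_iff_add_eq]

theorem potential_transitionWeight_single (hA : A.IsMetzler) {u : V → ℝ} (hu : 0 ≤ u)
    (hsuper : 1 ≤ u ᵥ* (α • 1 - A)) (hα : IsUnit (α • 1 - A).det) (σ σ' : V) :
    potential (looplessKernel (transitionWeight A α))
        (Pi.single σ' (ENNReal.ofReal (1 / (α - A σ' σ')))) σ =
      ENNReal.ofReal ((α • 1 - A)⁻¹ σ' σ) := by
  set p := looplessKernel (transitionWeight A α)
  set f : V → ℝ≥0∞ := Pi.single σ' (ENNReal.ofReal (1 / (α - A σ' σ')))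
  have hdiag (x : V) : A x x < α := hA.diag_lt hu (zero_lt_one.trans_le (hsuper x))
  have hf (x : V) : f x = ENNReal.ofReal ((Pi.single σ' 1 : V → ℝ) x / (α - A x x)) := by
    obtain rfl | hx := eq_or_ne x σ' <;> simp [f, *]
  have hδ : 0 ≤ (Pi.single σ' 1 : V → ℝ) := Pi.single_nonneg.2 zero_le_one
  have hδ1 : (Pi.single σ' 1 : V → ℝ) ≤ 1 := fun x => by
    rw [Pi.single_apply]
    split_ifs <;> simp
  have hle (x : V) : potential p f x ≤ ENNReal.ofReal (u x) :=
    potential_le_of_supersolution (u := fun y => ENNReal.ofReal (u y)) (fun y => by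
      rw [hf, ofReal_add_tsum_transitionWeight_le_iff hA (hdiag y) hu (hδ y)]
      exact (hδ1 y).trans (hsuper y)) x
  obtain ⟨g, hg, hpot⟩ : ∃ g : V → ℝ, 0 ≤ g ∧ ∀ x, potential p f x = ENNReal.ofReal (g x) :=
    ⟨fun x => (potential p f x).toReal, fun _ => ENNReal.toReal_nonneg, fun x =>
      (ENNReal.ofReal_toReal (ne_top_of_le_ne_top ENNReal.ofReal_ne_top (hle x))).symm⟩
  have hsystem : g ᵥ* (α • 1 - A) = Pi.single σ' 1 := funext fun x => by
    rw [eq_comm, ← ofReal_add_tsum_transitionWeight_eq_iff hA (hdiag x) hg (hδ x), ← hf]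
    simpa only [hpot] using (potential_eq_add_tsum p f x).symm
  have hrow : g = (α • 1 - A)⁻¹.row σ' := by
    rw [← Matrix.single_one_vecMul, ← hsystem, Matrix.vecMul_vecMul,
      Matrix.mul_nonsing_inv _ hα, Matrix.vecMul_one]
  rw [hpot, hrow, Matrix.row_apply]

end TransitionWeights

theorem resolvent_walk_sum_general {V : Type*} [Fintype V] [DecidableEq V]
    (A : Matrix V V ℝ) (hMetzler : A.IsMetzler) (α : ℝ) (hα : ∀ μ ∈ spectrum ℝ A, μ < α) :
    IsUnit (α • (1 : Matrix V V ℝ) - A).det ∧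
    ∀ σ σ' : V,
      (∑' l : {l : List V // IsWalk σ σ' l},
          pathWeight (fun x y => A y x / (α - A x x)) l.1) *
        ENNReal.ofReal (1 / (α - A σ' σ')) =
      ENNReal.ofReal ((α • (1 : Matrix V V ℝ) - A)⁻¹ σ' σ) := by
  have hunit : IsUnit (α • 1 - A).det :=
    (Matrix.isUnit_iff_isUnit_det _).1 (isUnit_smul_one_sub_of_forall_spectrum_lt hα le_rfl)
  have hu : 0 ≤ (1 : V → ℝ) ᵥ* (α • 1 - A)⁻¹ :=
    fun x => (hMetzler.vecMul_inv_pos hα (fun _ => zero_lt_one) x).le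
  have hsol : ((1 : V → ℝ) ᵥ* (α • 1 - A)⁻¹) ᵥ* (α • 1 - A) = 1 := by
    rw [Matrix.vecMul_vecMul, Matrix.nonsing_inv_mul _ hunit, Matrix.vecMul_one]
  refine ⟨hunit, fun σ σ' => ?_⟩
  exact (tsum_isWalk_pathWeight_mul (transitionWeight A α) _ σ σ').trans
    (potential_transitionWeight_single hMetzler hu hsol.ge hunit σ σ')

/-- **Walk-sum representation of the resolvent.** For a Metzler matrix `A` with
nonpositive diagonal, Perron root `lam`, and `α > max lam 0`, the matrix
`α·1 − A` is invertible and the entries of its inverse are computed by the sum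
over all walks of the products of the transition weights
`w(α)_{σ→σ'} = A_{σ',σ}/(α − A_{σ,σ})`, times `1/(α − A_{σ',σ'})`. -/
theorem resolvent_walk_sum {V : Type*} [Fintype V] [DecidableEq V] [Nonempty V]
    (A : Matrix V V ℝ) (lam : ℝ)
    (hMetzler : A.IsMetzler) (hdiag : ∀ σ, A σ σ ≤ 0)
    (hPerron : A.IsPerronRoot lam)
    (α : ℝ) (hαlam : lam < α) (hα : 0 < α) :
    IsUnit (α • (1 : Matrix V V ℝ) - A).det ∧
    ∀ σ σ' : V,
      (∑' l : {l : List V // IsWalk σ σ' l},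
          pathWeight (fun x y => A y x / (α - A x x)) l.1) *
        ENNReal.ofReal (1 / (α - A σ' σ')) =
      ENNReal.ofReal ((α • (1 : Matrix V V ℝ) - A)⁻¹ σ' σ) :=
  resolvent_walk_sum_general A hMetzler α fun _ hμ => (hPerron.le_of_mem_spectrum hμ).trans_lt hαlam
end

section
/- Resolvent identity at the Lyapunov exponent: Let V be a finite nonempty index set and A an irreducible Metzler real matrix indexed by V with A_{σ,σ} ≤ 0 for all σ, admitting a Perron root λ* (λ* is an eigenvalue of A and every complex eigenvalue of A has real part at most λ*). If λ* > 0, then for every σ ∈ V the excursion weight at α = λ* equals exactly 1: f(λ*)_{σ→σ} = 1, where f(λ*)_{σ→σ} is the tsum over all excursions σ = σ₁, …, σ_ℓ = σ (ℓ ≥ 2, σ_i ≠ σ for 1 < i < ℓ) of ∏_{i=1}^{ℓ−1} A_{σ_{i+1},σ_i}/(λ* − A_{σ_i,σ_i}). -/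
open scoped ENNReal

/-- `l` is an excursion from `σ` to `σ`: a walk of length `≥ 2` starting and
ending at `σ` whose intermediate vertices are all different from `σ`. -/
def IsExcursion {V : Type*} (σ : V) (l : List V) : Prop :=
  2 ≤ l.length ∧ l.head? = some σ ∧ l.getLast? = some σ ∧ ∀ x ∈ l.tail.dropLast, x ≠ σ

/-- The total weight `f(α)_{σ→σ}` of all excursions from `σ` to `σ`, with
transition weights `w(α)_{x→y} = A_{y,x}/(α − A_{x,x})`. -/
noncomputable def excursionWeight {V : Type*} (A : Matrix V V ℝ) (α : ℝ) (σ : V) : ℝ≥0∞ :=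
  ∑' l : {l : List V // IsExcursion σ l},
    pathWeight (fun x y => A y x / (α - A x x)) l.1

/-- `A` is irreducible: any two distinct indices are connected by a chain of
strictly positive transition entries. -/
def Matrix.IsIrreducibleMetzlerChain {V : Type*} (A : Matrix V V ℝ) : Prop :=
  ∀ σ σ' : V, σ ≠ σ' → Relation.TransGen (fun x y => x ≠ y ∧ 0 < A y x) σ σ'

/-!
The Perron root `lam` is the Collatz–Wielandt maximum of `A`, hence it has an entrywise positive
eigenvector `v`. The measure `u x = (lam - A x x) * v x` is invariant under the transition weights
at `lam`, because loops have nonpositive weight and so do not contribute. Pushing `u` through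
`n + 1` transitions while removing the mass that arrives at `σ` shows that the mass returned to `σ`
plus the mass still away from `σ` is always `u σ`. The returned mass is a convergent series, so its
terms tend to zero, and by irreducibility so do the first-passage weights from every other vertex.
No mass is left in the limit, so the excursions from `σ` have total weight `1`.
-/

open Filter Topology
open scoped Matrix

section PositiveMatrices

variable {n R : Type*} [Fintype n] [Ring R] [LinearOrder R] [IsStrictOrderedRing R]

theorem exists_pow_apply_pos_of_reflTransGen [DecidableEq n] {B : Matrix n n R}
    (hB : ∀ i j, 0 ≤ B i j) {i j : n}
    (hij : Relation.ReflTransGen (fun x y => 0 < B y x) i j) : ∃ k, 0 < (B ^ k) j i := by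
  induction hij with
  | refl => exact ⟨0, by simp⟩
  | @tail x y _ hxy ih =>
    obtain ⟨k, hk⟩ := ih
    refine ⟨k + 1, ?_⟩
    rw [pow_succ', Matrix.mul_apply]
    exact Finset.sum_pos' (fun z _ => mul_nonneg (hB y z) (Matrix.pow_apply_nonneg hB k z i))
      ⟨x, Finset.mem_univ x, mul_pos hxy hk⟩

theorem mulVec_pos_of_forall_pos {m : Type*} {C : Matrix m n R} (hC : ∀ i j, 0 < C i j)
    {z : n → R} (hz : 0 ≤ z) (hz0 : z ≠ 0) (i : m) : 0 < (C *ᵥ z) i := by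
  obtain ⟨j, hj⟩ := Function.ne_iff.mp hz0
  exact Finset.sum_pos' (fun k _ => mul_nonneg (hC i k).le (hz k))
    ⟨j, Finset.mem_univ j, mul_pos (hC i j) ((hz j).lt_of_ne' hj)⟩

end PositiveMatrices

section CollatzWielandt

variable {V : Type*} [Fintype V] {A : Matrix V V ℝ} {r : ℝ} {x : V → ℝ}

/-- `x` is a nonzero nonnegative vector with `r • x ≤ A x`: the admissible pairs in the
Collatz–Wielandt variational characterization of the Perron root. -/
structure IsSubeigenvector (A : Matrix V V ℝ) (r : ℝ) (x : V → ℝ) : Prop where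
  nonneg : 0 ≤ x
  ne_zero : x ≠ 0
  smul_le_mulVec : r • x ≤ A *ᵥ x

/-- The set of all `r` admitting a subeigenvector; its maximum is the Collatz–Wielandt value. -/
def subeigenvalues (A : Matrix V V ℝ) : Set ℝ := {r | ∃ x, IsSubeigenvector A r x}

theorem IsSubeigenvector.smul (h : IsSubeigenvector A r x) {c : ℝ} (hc : 0 < c) :
    IsSubeigenvector A r (c • x) where
  nonneg := smul_nonneg hc.le h.nonneg
  ne_zero := smul_ne_zero hc.ne' h.ne_zero
  smul_le_mulVec := by
    rw [Matrix.mulVec_smul, smul_comm]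
    exact smul_le_smul_of_nonneg_left h.smul_le_mulVec hc.le

theorem IsSubeigenvector.sum_pos (h : IsSubeigenvector A r x) : 0 < ∑ i, x i :=
  Fintype.sum_pos (h.nonneg.lt_of_ne' h.ne_zero)

theorem mem_subeigenvalues_iff_exists_mem_stdSimplex :
    r ∈ subeigenvalues A ↔ ∃ x ∈ stdSimplex ℝ V, r • x ≤ A *ᵥ x := by
  constructor
  · rintro ⟨x, hx⟩
    have hx' := hx.smul (inv_pos.mpr hx.sum_pos)
    refine ⟨_, ⟨hx'.nonneg, ?_⟩, hx'.smul_le_mulVec⟩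
    simp only [Pi.smul_apply, smul_eq_mul, ← Finset.mul_sum]
    exact inv_mul_cancel₀ hx.sum_pos.ne'
  · rintro ⟨x, ⟨hx, hsum⟩, hle⟩
    exact ⟨x, hx, by rintro rfl; simp at hsum, hle⟩

theorem bddAbove_subeigenvalues (A : Matrix V V ℝ) : BddAbove (subeigenvalues A) := by
  refine ⟨∑ i, ∑ j, |A i j|, fun r hr => ?_⟩
  obtain ⟨x, hx, hle⟩ := mem_subeigenvalues_iff_exists_mem_stdSimplex.mp hr
  have hterm (i j : V) : A i j * x j ≤ |A i j| :=
    (mul_le_mul_of_nonneg_right (le_abs_self _) (hx.1 j)).trans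
      (mul_le_of_le_one_right (abs_nonneg _) (mem_Icc_of_mem_stdSimplex hx j).2)
  calc r = ∑ i, r * x i := by rw [← Finset.mul_sum, hx.2, mul_one]
    _ ≤ ∑ i, (A *ᵥ x) i := Finset.sum_le_sum fun i _ => hle i
    _ ≤ ∑ i, ∑ j, |A i j| :=
      Finset.sum_le_sum fun i _ => Finset.sum_le_sum fun j _ => hterm i j

theorem isClosed_subeigenvalues (A : Matrix V V ℝ) : IsClosed (subeigenvalues A) := by
  have : CompactSpace (stdSimplex ℝ V) := isCompact_iff_compactSpace.mp (isCompact_stdSimplex ℝ V)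
  have hclosed : IsClosed {q : ℝ × stdSimplex ℝ V | q.1 • q.2.1 ≤ A *ᵥ q.2.1} :=
    isClosed_le (by fun_prop) (by fun_prop)
  convert isClosedMap_fst_of_compactSpace _ hclosed
  ext r
  simp [mem_subeigenvalues_iff_exists_mem_stdSimplex]

end CollatzWielandt

section PerronFrobenius

variable {V : Type*} [Fintype V] {A : Matrix V V ℝ} {r lam : ℝ}

theorem isSubeigenvector_abs (hA : A.IsMetzler) {v : V → ℝ} (hv0 : v ≠ 0)
    (hv : A *ᵥ v = r • v) : IsSubeigenvector A r |v| := by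
  refine ⟨abs_nonneg v, by simpa [abs_eq_zero] using hv0, fun i => ?_⟩
  obtain ⟨ε, hε, hεi⟩ : ∃ ε : ℝ, |ε| = 1 ∧ |v i| = ε * v i := by
    rcases abs_choice (v i) with h | h
    exacts [⟨1, by simp, by simp [h]⟩, ⟨-1, by simp, by simp [h]⟩]
  calc r * |v i| = ε * (A *ᵥ v) i := by rw [hv, hεi, Pi.smul_apply, smul_eq_mul, mul_left_comm]
    _ = ∑ j, A i j * (ε * v j) := by
      simp only [Matrix.mulVec, dotProduct, Finset.mul_sum, mul_left_comm]
    _ ≤ ∑ j, A i j * |v j| := Finset.sum_le_sum fun j _ => by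
      rcases eq_or_ne j i with rfl | hji
      · rw [hεi]
      · refine mul_le_mul_of_nonneg_left ((le_abs_self _).trans_eq ?_) (hA j i hji)
        rw [abs_mul, hε, one_mul]

theorem exists_commute_forall_pos (hA : A.IsMetzler) (hirr : A.IsIrreducibleMetzlerChain) :
    ∃ C : Matrix V V ℝ, Commute C A ∧ ∀ i j, 0 < C i j := by
  classical
  set c := ∑ i, |A i i|
  set B := A + c • (1 : Matrix V V ℝ)
  have hoff {i j : V} (hij : i ≠ j) : B i j = A i j := by simp [B, hij]
  have hB (i j : V) : 0 ≤ B i j := by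
    rcases eq_or_ne i j with rfl | hij
    · have hc : |A i i| ≤ c :=
        Finset.single_le_sum (fun k _ => abs_nonneg (A k k)) (Finset.mem_univ i)
      have hAB : B i i = A i i + c := by simp [B]
      linarith [neg_abs_le (A i i)]
    · exact hoff hij ▸ hA j i hij.symm
  have hreach (i j : V) : ∃ k, 0 < (B ^ k) i j := by
    refine exists_pow_apply_pos_of_reflTransGen hB ?_
    rcases eq_or_ne j i with rfl | hji
    · exact .refl
    · exact (Relation.TransGen.mono (fun x y hxy => by rw [hoff hxy.1.symm]; exact hxy.2) _ _
        (hirr j i hji)).to_reflTransGen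
  choose k hk using hreach
  have hBA : Commute B A := (Commute.refl A).add_left ((Commute.one_left A).smul_left c)
  refine ⟨∑ i, ∑ j, B ^ k i j,
    .sum_left _ _ _ fun i _ => .sum_left _ _ _ fun j _ => hBA.pow_left _, fun i j => ?_⟩
  simp only [Matrix.sum_apply]
  have hnonneg (a b : V) : 0 ≤ (B ^ k a b) i j := Matrix.pow_apply_nonneg hB _ i j
  exact Finset.sum_pos' (fun a _ => Finset.sum_nonneg fun b _ => hnonneg a b)
    ⟨i, Finset.mem_univ i, Finset.sum_pos' (fun b _ => hnonneg i b) ⟨j, Finset.mem_univ j, hk i j⟩⟩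

theorem exists_gt_smul_le_of_forall_lt {ι : Type*} [Finite ι] {r : ℝ} {x y : ι → ℝ}
    (h : ∀ i, r * x i < y i) : ∃ s > r, s • x ≤ y := by
  have hev (i : ι) : ∀ᶠ s in 𝓝[>] r, s * x i ≤ y i := by
    have hcont : Tendsto (fun s => s * x i) (𝓝[>] r) (𝓝 (r * x i)) :=
      (continuous_mul_const (x i)).continuousWithinAt
    exact (hcont.eventually_lt_const (h i)).mono fun s hs => hs.le
  obtain ⟨s, hs, hrs⟩ := ((eventually_all.mpr hev).and self_mem_nhdsWithin).exists
  exact ⟨s, hrs, hs⟩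

theorem exists_pos_eigenvector_of_isGreatest (hA : A.IsMetzler)
    (hirr : A.IsIrreducibleMetzlerChain) (hr : IsGreatest (subeigenvalues A) r) :
    ∃ x : V → ℝ, (∀ i, 0 < x i) ∧ A *ᵥ x = r • x := by
  obtain ⟨C, hCA, hC⟩ := exists_commute_forall_pos hA hirr
  obtain ⟨x, hx⟩ := hr.1
  have hy : ∀ i, 0 < (C *ᵥ x) i := mulVec_pos_of_forall_pos hC hx.nonneg hx.ne_zero
  have hcomm : A *ᵥ (C *ᵥ x) = C *ᵥ (A *ᵥ x) := by
    rw [Matrix.mulVec_mulVec, Matrix.mulVec_mulVec, hCA.eq]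
  have heig : A *ᵥ x = r • x := by
    by_contra hne
    -- `C` spreads a slack in one coordinate to all of them, which leaves room to increase `r`.
    have hlt (i : V) : r * (C *ᵥ x) i < (A *ᵥ (C *ᵥ x)) i := by
      have hpos := mulVec_pos_of_forall_pos hC (sub_nonneg.mpr hx.smul_le_mulVec)
        (sub_ne_zero.mpr hne) i
      rwa [Matrix.mulVec_sub, Matrix.mulVec_smul, ← hcomm, Pi.sub_apply, sub_pos] at hpos
    obtain ⟨s, hrs, hs⟩ := exists_gt_smul_le_of_forall_lt hlt
    obtain ⟨i, -⟩ := Function.ne_iff.mp hx.ne_zero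
    have hy0 : C *ᵥ x ≠ 0 := fun h => (hy i).ne' (congrFun h i)
    exact hrs.not_ge (hr.2 ⟨C *ᵥ x, fun i => (hy i).le, hy0, hs⟩)
  exact ⟨C *ᵥ x, hy, by rw [hcomm, heig, Matrix.mulVec_smul]⟩

theorem le_of_isPerronRoot (h : A.IsPerronRoot lam) {x : V → ℝ} (hx0 : x ≠ 0)
    (hx : A *ᵥ x = r • x) : r ≤ lam := by
  refine h.2 r ⟨fun i => x i, fun h0 => hx0 (funext fun i => ?_), funext fun i => ?_⟩
  · simpa using congrFun h0 i
  · simpa [Matrix.mulVec, dotProduct] using congrArg Complex.ofReal (congrFun hx i)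

theorem exists_pos_eigenvector_of_isPerronRoot (hA : A.IsMetzler)
    (hirr : A.IsIrreducibleMetzlerChain) (hPerron : A.IsPerronRoot lam) :
    ∃ x : V → ℝ, (∀ i, 0 < x i) ∧ A *ᵥ x = lam • x := by
  obtain ⟨v, hv0, hv⟩ := hPerron.1
  have hlam : lam ∈ subeigenvalues A := ⟨|v|, isSubeigenvector_abs hA hv0 hv⟩
  have hmax := (isClosed_subeigenvalues A).isGreatest_csSup ⟨lam, hlam⟩ (bddAbove_subeigenvalues A)
  obtain ⟨x, hx, heig⟩ := exists_pos_eigenvector_of_isGreatest hA hirr hmax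
  obtain ⟨i, -⟩ := Function.ne_iff.mp hv0
  have hx0 : x ≠ 0 := fun h => (hx i).ne' (congrFun h i)
  have hsSup : sSup (subeigenvalues A) = lam :=
    (le_of_isPerronRoot hPerron hx0 heig).antisymm (hmax.2 hlam)
  exact ⟨x, hx, hsSup ▸ heig⟩

end PerronFrobenius

section FirstPassage

variable {V : Type*} {p : V → V → ℝ≥0∞} {σ : V} {u : V → ℝ≥0∞}

/-- The total `p`-weight of the paths from a vertex to `σ` with exactly `n` intermediate vertices,
none of which is `σ`. -/
noncomputable def firstPassageWeight (p : V → V → ℝ≥0∞) (σ : V) : ℕ → V → ℝ≥0∞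
  | 0, x => p x σ
  | n + 1, x => ∑' y : {y // y ≠ σ}, p x y * firstPassageWeight p σ n y

theorem tsum_eq_add_tsum_subtype_ne (f : V → ℝ≥0∞) (σ : V) :
    ∑' x, f x = f σ + ∑' x : {x // x ≠ σ}, f x := by
  rw [← tsum_singleton σ f]
  exact (ENNReal.summable.tsum_add_tsum_compl ENNReal.summable).symm

theorem tsum_ne_mul_firstPassageWeight (hu : ∀ y, ∑' x, u x * p x y = u y) (n : ℕ) :
    ∑' y : {y // y ≠ σ}, u y * firstPassageWeight p σ n y =
      ∑' x, u x * firstPassageWeight p σ (n + 1) x := by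
  simp only [firstPassageWeight, ← ENNReal.tsum_mul_left]
  rw [ENNReal.tsum_comm]
  refine tsum_congr fun y => ?_
  rw [← hu y, ← ENNReal.tsum_mul_right]
  exact tsum_congr fun x => mul_assoc _ _ _

theorem mul_sum_firstPassageWeight_add (hu : ∀ y, ∑' x, u x * p x y = u y) (n : ℕ) :
    u σ * ∑ k ∈ Finset.range (n + 1), firstPassageWeight p σ k σ +
      ∑' x : {x // x ≠ σ}, u x * firstPassageWeight p σ n x = u σ := by
  induction n with
  | zero =>
    rw [zero_add, Finset.sum_range_one]
    exact (tsum_eq_add_tsum_subtype_ne (fun x => u x * p x σ) σ).symm.trans (hu σ)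
  | succ n ih =>
    rwa [tsum_ne_mul_firstPassageWeight hu, tsum_eq_add_tsum_subtype_ne _ σ, ← add_assoc,
      ← mul_add, ← Finset.sum_range_succ] at ih

theorem tsum_firstPassageWeight_le_one (hu : ∀ y, ∑' x, u x * p x y = u y) (hσ0 : u σ ≠ 0)
    (hσ : u σ ≠ ∞) : ∑' n, firstPassageWeight p σ n σ ≤ 1 := by
  refine ENNReal.tsum_le_of_sum_range_le fun n => ?_
  have hle : u σ * ∑ k ∈ Finset.range (n + 1), firstPassageWeight p σ k σ ≤ u σ * 1 :=
    le_self_add.trans_eq ((mul_sum_firstPassageWeight_add hu n).trans (mul_one _).symm)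
  exact (Finset.sum_le_sum_of_subset (Finset.range_mono n.le_succ)).trans
    ((ENNReal.mul_le_mul_iff_right hσ0 hσ).mp hle)

theorem mul_tsum_firstPassageWeight_le (x : V) {y : V} (hy : y ≠ σ) :
    p x y * ∑' n, firstPassageWeight p σ n y ≤ ∑' n, firstPassageWeight p σ n x := by
  have hstep (n : ℕ) :
      p x y * firstPassageWeight p σ n y ≤ firstPassageWeight p σ (n + 1) x :=
    ENNReal.le_tsum (f := fun z : {z // z ≠ σ} => p x z * firstPassageWeight p σ n z) ⟨y, hy⟩
  rw [← ENNReal.tsum_mul_left]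
  exact (ENNReal.tsum_le_tsum hstep).trans
    (ENNReal.tsum_comp_le_tsum_of_injective (add_left_injective 1) _)

theorem tsum_firstPassageWeight_ne_top (hσ : ∑' n, firstPassageWeight p σ n σ ≠ ∞) {x : V}
    (hx : Relation.ReflTransGen (fun x y => p x y ≠ 0) σ x) :
    ∑' n, firstPassageWeight p σ n x ≠ ∞ := by
  induction hx with
  | refl => exact hσ
  | @tail x y _ hxy ih =>
    rcases eq_or_ne y σ with rfl | hy
    · exact hσ
    · exact fun htop => ih (top_le_iff.mp
        (ENNReal.mul_top hxy ▸ htop ▸ mul_tsum_firstPassageWeight_le x hy))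

theorem tsum_firstPassageWeight_eq_one [Finite V] (hu : ∀ y, ∑' x, u x * p x y = u y)
    (hu_top : ∀ x, u x ≠ ∞) (hσ0 : u σ ≠ 0)
    (hreach : ∀ x, Relation.ReflTransGen (fun x y => p x y ≠ 0) σ x) :
    ∑' n, firstPassageWeight p σ n σ = 1 := by
  have := Fintype.ofFinite {x // x ≠ σ}
  have hσ := ne_top_of_le_ne_top ENNReal.one_ne_top
    (tsum_firstPassageWeight_le_one hu hσ0 (hu_top σ))
  have hzero (x : V) : Tendsto (fun n => u x * firstPassageWeight p σ n x) atTop (𝓝 0) := by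
    simpa using ENNReal.Tendsto.const_mul
      (ENNReal.tendsto_atTop_zero_of_tsum_ne_top (tsum_firstPassageWeight_ne_top hσ (hreach x)))
      (.inr (hu_top x))
  have haway : Tendsto (fun n => ∑' x : {x // x ≠ σ}, u x * firstPassageWeight p σ n x)
      atTop (𝓝 0) := by
    simpa [tsum_fintype] using
      tendsto_finsetSum Finset.univ fun (x : {x // x ≠ σ}) _ => hzero x
  have hreturned : Tendsto
      (fun n => u σ * ∑ k ∈ Finset.range (n + 1), firstPassageWeight p σ k σ) atTop
      (𝓝 (u σ * ∑' n, firstPassageWeight p σ n σ)) :=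
    ENNReal.Tendsto.const_mul
      ((tendsto_add_atTop_iff_nat 1).mpr (ENNReal.tendsto_nat_tsum _)) (.inr (hu_top σ))
  have hmass : u σ * ∑' n, firstPassageWeight p σ n σ = u σ * 1 := by
    have hlim := hreturned.add haway
    simp only [mul_sum_firstPassageWeight_add hu, add_zero] at hlim
    rw [mul_one]
    exact tendsto_nhds_unique hlim tendsto_const_nhds
  exact (ENNReal.mul_right_inj hσ0 (hu_top σ)).mp hmass

end FirstPassage

section Excursions

variable {V : Type*}

theorem isExcursion_iff_exists_map_val {σ : V} {l : List V} :
    IsExcursion σ l ↔ ∃ m : List {x // x ≠ σ}, σ :: (m.map Subtype.val ++ [σ]) = l := by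
  constructor
  · rintro ⟨hlen, hhead, hlast, hmid⟩
    obtain ⟨t, rfl⟩ := List.head?_eq_some_iff.mp hhead
    obtain ⟨s, a, rfl⟩ : ∃ s a, t = s ++ [a] :=
      (List.eq_nil_or_concat' t).resolve_left (by rintro rfl; simp at hlen)
    rw [← List.cons_append, List.getLast?_concat, Option.some_inj] at hlast
    rw [List.tail_cons, List.dropLast_concat] at hmid
    lift s to List {x // x ≠ σ} using hmid
    exact ⟨s, by rw [hlast]⟩
  · rintro ⟨m, rfl⟩
    refine ⟨by simp, by simp, by rw [← List.cons_append, List.getLast?_concat], ?_⟩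
    rw [List.tail_cons, List.dropLast_concat]
    intro x hx
    obtain ⟨y, -, rfl⟩ := List.mem_map.mp hx
    exact y.2

/-- An excursion from `σ` is encoded by the list of its intermediate vertices. -/
noncomputable def excursionEquiv (σ : V) : List {x // x ≠ σ} ≃ {l : List V // IsExcursion σ l} :=
  Equiv.ofBijective
    (fun m => ⟨σ :: (m.map Subtype.val ++ [σ]), isExcursion_iff_exists_map_val.mpr ⟨m, rfl⟩⟩)
    ⟨fun m m' h => List.map_injective_iff.mpr Subtype.val_injective (by simpa using h),
      fun l => (isExcursion_iff_exists_map_val.mp l.2).imp fun _ hm => Subtype.ext hm⟩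

theorem tsum_pathWeight_ofFn (w : V → V → ℝ) (σ : V) (n : ℕ) (x : V) :
    ∑' t : Fin n → {y // y ≠ σ}, pathWeight w (x :: ((List.ofFn t).map Subtype.val ++ [σ])) =
      firstPassageWeight (fun x y => ENNReal.ofReal (w x y)) σ n x := by
  induction n generalizing x with
  | zero => simp [pathWeight, firstPassageWeight]
  | succ n ih =>
    rw [← (Fin.consEquiv fun _ : Fin (n + 1) => {y // y ≠ σ}).tsum_eq, ENNReal.tsum_prod',
      firstPassageWeight]
    refine tsum_congr fun y => ?_
    rw [← ih y, ← ENNReal.tsum_mul_left]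
    exact tsum_congr fun t => by simp [Fin.consEquiv, pathWeight]

theorem excursionWeight_eq_tsum_firstPassageWeight (A : Matrix V V ℝ) (α : ℝ) (σ : V) :
    excursionWeight A α σ =
      ∑' n, firstPassageWeight (fun x y => ENNReal.ofReal (A y x / (α - A x x))) σ n σ := by
  rw [excursionWeight, ← (excursionEquiv σ).tsum_eq, ← List.equivSigmaTuple.symm.tsum_eq,
    ENNReal.tsum_sigma']
  exact tsum_congr fun n => tsum_pathWeight_ofFn _ σ n σ

end Excursions

section Resolvent

variable {V : Type*} [Fintype V]

theorem sum_subtype_ne_mul_of_mulVec_eq_smul {R : Type*} [Ring R] [DecidableEq V]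
    {A : Matrix V V R} {α : R} {v : V → R} (hv : A *ᵥ v = α • v) (y : V) :
    ∑ x : {x // x ≠ y}, A y x * v x = (α - A y y) * v y := by
  have hy : ∑ x, A y x * v x = α * v y := congrFun hv y
  rw [Fintype.sum_eq_add_sum_subtype_ne _ y] at hy
  rw [sub_mul, eq_sub_iff_add_eq', hy]

variable {A : Matrix V V ℝ} {α : ℝ} {v : V → ℝ}

theorem apply_self_lt_of_pos_eigenvector [Nontrivial V] (hA : A.IsMetzler)
    (hirr : A.IsIrreducibleMetzlerChain) (hv0 : ∀ x, 0 < v x) (hv : A *ᵥ v = α • v) (y : V) :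
    A y y < α := by
  classical
  obtain ⟨z, hzy⟩ := exists_ne y
  obtain ⟨x, -, hxy, hpos⟩ := Relation.TransGen.tail'_iff.mp (hirr z y hzy)
  have hsum : 0 < ∑ x : {x // x ≠ y}, A y x * v x :=
    Finset.sum_pos' (fun x _ => mul_nonneg (hA x y x.2) (hv0 x).le)
      ⟨⟨x, hxy⟩, Finset.mem_univ _, mul_pos hpos (hv0 x)⟩
  rw [sum_subtype_ne_mul_of_mulVec_eq_smul hv] at hsum
  exact sub_pos.mp (pos_of_mul_pos_left hsum (hv0 y).le)

theorem tsum_mul_transitionWeight (hA : A.IsMetzler) (hdiag : ∀ x, A x x ≤ 0)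
    (hα : ∀ x, A x x < α) (hv0 : ∀ x, 0 ≤ v x) (hv : A *ᵥ v = α • v) (y : V) :
    ∑' x, ENNReal.ofReal ((α - A x x) * v x) * ENNReal.ofReal (A y x / (α - A x x)) =
      ENNReal.ofReal ((α - A y y) * v y) := by
  classical
  have hterm (x : V) : ENNReal.ofReal ((α - A x x) * v x) * ENNReal.ofReal (A y x / (α - A x x)) =
      ENNReal.ofReal (A y x * v x) := by
    have hden := sub_pos.mpr (hα x)
    rw [← ENNReal.ofReal_mul (mul_nonneg hden.le (hv0 x)), mul_right_comm,
      mul_div_cancel₀ _ hden.ne']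
  have hloop : ENNReal.ofReal (A y y * v y) = 0 :=
    ENNReal.ofReal_of_nonpos (mul_nonpos_of_nonpos_of_nonneg (hdiag y) (hv0 y))
  calc _ = ∑' x, ENNReal.ofReal (A y x * v x) := tsum_congr hterm
    _ = ∑ x : {x // x ≠ y}, ENNReal.ofReal (A y x * v x) := by
      rw [tsum_eq_add_tsum_subtype_ne _ y, hloop, zero_add, tsum_fintype]
    _ = ENNReal.ofReal (∑ x : {x // x ≠ y}, A y x * v x) :=
      (ENNReal.ofReal_sum_of_nonneg fun (x : {x // x ≠ y}) _ =>
        mul_nonneg (hA x y x.2) (hv0 x)).symm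
    _ = ENNReal.ofReal ((α - A y y) * v y) := by rw [sum_subtype_ne_mul_of_mulVec_eq_smul hv]

theorem excursionWeight_eq_one_of_pos_eigenvector (hA : A.IsMetzler) (hdiag : ∀ x, A x x ≤ 0)
    (hirr : A.IsIrreducibleMetzlerChain) (hα : ∀ x, A x x < α) (hv0 : ∀ x, 0 < v x)
    (hv : A *ᵥ v = α • v) (σ : V) : excursionWeight A α σ = 1 := by
  have hden (x : V) : 0 < α - A x x := sub_pos.mpr (hα x)
  rw [excursionWeight_eq_tsum_firstPassageWeight]
  refine tsum_firstPassageWeight_eq_one (u := fun x => ENNReal.ofReal ((α - A x x) * v x))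
    (tsum_mul_transitionWeight hA hdiag hα (fun x => (hv0 x).le) hv)
    (fun x => ENNReal.ofReal_ne_top)
    (ENNReal.ofReal_pos.mpr (mul_pos (hden σ) (hv0 σ))).ne' fun x => ?_
  rcases eq_or_ne σ x with rfl | hx
  · exact .refl
  · exact (Relation.TransGen.mono
      (fun a b hab => (ENNReal.ofReal_pos.mpr (div_pos hab.2 (hden a))).ne') _ _
      (hirr σ x hx)).to_reflTransGen

theorem nontrivial_of_apply_self_lt (hα : ∀ x, A x x < α) (hv0 : v ≠ 0) (hv : A *ᵥ v = α • v) :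
    Nontrivial V := by
  obtain ⟨x, hx⟩ := Function.ne_iff.mp hv0
  by_contra htriv
  have := not_nontrivial_iff_subsingleton.mp htriv
  have heq : A x x * v x = α * v x := by
    simpa [Matrix.mulVec, dotProduct, Fintype.sum_subsingleton _ x] using congrFun hv x
  exact (hα x).ne (mul_right_cancel₀ hx heq)

end Resolvent

theorem resolvent_identity_at_lyapunov_general {V : Type*} [Fintype V] [Nontrivial V]
    (A : Matrix V V ℝ) (lam : ℝ)
    (hMetzler : A.IsMetzler) (hdiag : ∀ σ, A σ σ ≤ 0) (hirr : A.IsIrreducibleMetzlerChain)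
    (hPerron : A.IsPerronRoot lam) (σ : V) : excursionWeight A lam σ = 1 := by
  obtain ⟨v, hv0, hv⟩ := exists_pos_eigenvector_of_isPerronRoot hMetzler hirr hPerron
  exact excursionWeight_eq_one_of_pos_eigenvector hMetzler hdiag hirr
    (apply_self_lt_of_pos_eigenvector hMetzler hirr hv0 hv) hv0 hv σ

/-- **Resolvent identity at the Lyapunov exponent.** For an irreducible Metzler
matrix `A` with nonpositive diagonal and strictly positive Perron root `lam`,
the excursion weight at `α = lam` equals exactly `1` at every vertex. -/
theorem resolvent_identity_at_lyapunov {V : Type*} [Fintype V] [DecidableEq V] [Nonempty V]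
    (A : Matrix V V ℝ) (lam : ℝ)
    (hMetzler : A.IsMetzler) (hdiag : ∀ σ, A σ σ ≤ 0)
    (hirr : A.IsIrreducibleMetzlerChain) (hPerron : A.IsPerronRoot lam)
    (hlam : 0 < lam) :
    ∀ σ : V, excursionWeight A lam σ = 1 := by
  obtain ⟨v, hv0, hv⟩ := hPerron.1
  have := nontrivial_of_apply_self_lt (fun σ => (hdiag σ).trans_lt hlam) hv0 hv
  exact resolvent_identity_at_lyapunov_general A lam hMetzler hdiag hirr hPerron
end

section
/- Loop erasure increases weight for closed walks: Let V be a type, σ* ∈ V, and w : V → V → ℝ with 0 ≤ w(u,v) ≤ 1 for all u, v. Let γ = (σ₁, …, σ_ℓ) be a finite sequence with ℓ ≥ 2, σ₁ = σ_ℓ = σ*. Then there exists a finite sequence γ' = (τ₁, …, τ_m) with m ≥ 2, τ₁ = τ_m = σ*, whose intermediate vertices τ₂, …, τ_{m−1} are pairwise distinct and all different from σ*, such that every consecutive pair (τ_j, τ_{j+1}) of γ' occurs as a consecutive pair (σ_i, σ_{i+1}) of γ, and ∏_{j=1}^{m−1} w(τ_j, τ_{j+1}) ≥ ∏_{i=1}^{ℓ−1}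 w(σ_i, σ_{i+1}). -/
/-- The weight of a finite walk: the real product of the edge weights along its
consecutive pairs; the empty product is `1`. -/
def walkWeightR {V : Type*} (w : V → V → ℝ) : List V → ℝ
  | [] => 1
  | [_] => 1
  | a :: b :: l => w a b * walkWeightR w (b :: l)

/-!
The starting point `σ*` is set aside and the loops of the rest of the walk, which ends at `σ*`, are
erased. The result has no repeated vertex, and its last vertex is `σ*`, so `σ*` does not occur
earlier in it; putting the starting point back gives a simple excursion. Erasing loops only deletes
steps, so the list of steps of the excursion is a sublist of that of the original walk, and its
weight arises by omitting factors of `[0,1]` from a product of such factors.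
-/

section Lists

variable {α : Type*} {l l₁ l₂ : List α} {a : α}

theorem getLast?_eq_of_suffix (h : l₁ <:+ l₂) (hne : l₁ ≠ []) : l₁.getLast? = l₂.getLast? := by
  obtain ⟨s, rfl⟩ := h
  exact (List.getLast?_append_of_ne_nil s hne).symm

theorem notMem_dropLast_of_nodup (hnodup : l.Nodup) (hlast : l.getLast? = some a) :
    a ∉ l.dropLast := by
  obtain ⟨s, rfl⟩ := List.getLast?_eq_some_iff.1 hlast
  rw [List.dropLast_concat]
  exact fun ha ↦ List.disjoint_of_nodup_append hnodup ha List.mem_cons_self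

theorem head?_dropWhile_ne [DecidableEq α] (ha : a ∈ l) :
    (l.dropWhile (· ≠ a)).head? = some a := by
  induction l with
  | nil => simp at ha
  | cons b l ih => grind [List.dropWhile_cons]

theorem consecutivePairs_drop (l : List α) (n : ℕ) :
    (l.drop n).consecutivePairs = l.consecutivePairs.drop n := by
  simp only [List.consecutivePairs, List.zip_eq_zipWith, List.drop_zipWith, List.tail_drop,
    List.drop_tail]

theorem consecutivePairs_suffix (h : l₁ <:+ l₂) :
    l₁.consecutivePairs <:+ l₂.consecutivePairs := by
  rw [List.suffix_iff_eq_drop.1 h, consecutivePairs_drop]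
  exact List.drop_suffix _ _

theorem consecutivePairs_sublist_cons (a : α) (l : List α) :
    l.consecutivePairs.Sublist (a :: l).consecutivePairs :=
  (consecutivePairs_suffix (List.suffix_cons a l)).sublist

theorem consecutivePairs_cons_sublist_cons (a : α) (hhead : l₁.head? = l₂.head?)
    (h : l₁.consecutivePairs.Sublist l₂.consecutivePairs) :
    (a :: l₁).consecutivePairs.Sublist (a :: l₂).consecutivePairs := by
  cases l₁ with
  | nil => exact List.nil_sublist _
  | cons b l₁ =>
    obtain ⟨l₂, rfl⟩ := List.head?_eq_some_iff.1 hhead.symm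
    exact h.cons_cons (a, b)

end Lists

section Weight

theorem prod_le_prod_of_sublist {R : Type*} [CommMonoidWithZero R] [PartialOrder R]
    [ZeroLEOneClass R] [PosMulMono R] {l₁ l₂ : List R} (h : l₁.Sublist l₂)
    (h₀ : ∀ x ∈ l₂, 0 ≤ x) (h₁ : ∀ x ∈ l₂, x ≤ 1) : l₂.prod ≤ l₁.prod := by
  have : MulPosMono R := posMulMono_iff_mulPosMono.1 inferInstance
  induction h with
  | slnil => exact le_rfl
  | @cons l₁ l₂ a _ ih =>
    rw [List.forall_mem_cons] at h₀ h₁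
    rw [List.prod_cons]
    calc a * l₂.prod ≤ l₂.prod := mul_le_of_le_one_left (List.prod_nonneg h₀.2) h₁.1
      _ ≤ l₁.prod := ih h₀.2 h₁.2
  | cons_cons a _ ih =>
    rw [List.forall_mem_cons] at h₀ h₁
    simp only [List.prod_cons]
    exact mul_le_mul_of_nonneg_left (ih h₀.2 h₁.2) h₀.1

variable {V : Type*}

theorem walkWeightR_eq_prod (w : V → V → ℝ) :
    ∀ l : List V, walkWeightR w l = (l.consecutivePairs.map fun p ↦ w p.1 p.2).prod
  | [] => rfl
  | [_] => rfl
  | a :: b :: l => by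
    rw [walkWeightR, walkWeightR_eq_prod w (b :: l)]
    rfl

theorem walkWeightR_le_of_consecutivePairs_sublist {w : V → V → ℝ} {l₁ l₂ : List V}
    (h : l₁.consecutivePairs.Sublist l₂.consecutivePairs)
    (hw : ∀ p ∈ l₂.consecutivePairs, 0 ≤ w p.1 p.2 ∧ w p.1 p.2 ≤ 1) :
    walkWeightR w l₂ ≤ walkWeightR w l₁ := by
  rw [walkWeightR_eq_prod, walkWeightR_eq_prod]
  exact prod_le_prod_of_sublist (h.map _) (List.forall_mem_map.2 fun p hp ↦ (hw p hp).1)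
    (List.forall_mem_map.2 fun p hp ↦ (hw p hp).2)

end Weight

section LoopErasure

variable {V : Type*} [DecidableEq V]

/-- The loop erasure of a walk: a walk without repeated vertices, with the same endpoints. Loops are
erased from the end of the walk backwards: when a vertex put in front of a loop-erased walk already
occurs in it, the part before that occurrence is dropped. -/
def loopErasure : List V → List V
  | [] => []
  | a :: l =>
    let e := loopErasure l
    if a ∈ e then e.dropWhile (· ≠ a) else a :: e

theorem loopErasure_cons_of_mem {a : V} {l : List V} (ha : a ∈ loopErasure l) :
    loopErasure (a :: l) = (loopErasure l).dropWhile (· ≠ a) :=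
  if_pos ha

theorem loopErasure_cons_of_notMem {a : V} {l : List V} (ha : a ∉ loopErasure l) :
    loopErasure (a :: l) = a :: loopErasure l :=
  if_neg ha

theorem head?_loopErasure (l : List V) : (loopErasure l).head? = l.head? := by
  cases l with
  | nil => rfl
  | cons a l =>
    by_cases ha : a ∈ loopErasure l
    · rw [loopErasure_cons_of_mem ha, head?_dropWhile_ne ha, List.head?_cons]
    · rw [loopErasure_cons_of_notMem ha, List.head?_cons, List.head?_cons]

theorem loopErasure_eq_nil_iff {l : List V} : loopErasure l = [] ↔ l = [] := by
  rw [← List.head?_eq_none_iff, head?_loopErasure, List.head?_eq_none_iff]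

theorem nodup_loopErasure (l : List V) : (loopErasure l).Nodup := by
  induction l with
  | nil => exact List.nodup_nil
  | cons a l ih =>
    by_cases ha : a ∈ loopErasure l
    · rw [loopErasure_cons_of_mem ha]
      exact ih.sublist (List.dropWhile_sublist _)
    · rw [loopErasure_cons_of_notMem ha]
      exact ih.cons ha

theorem getLast?_loopErasure (l : List V) : (loopErasure l).getLast? = l.getLast? := by
  induction l with
  | nil => rfl
  | cons a l ih =>
    by_cases ha : a ∈ loopErasure l
    · have hne : loopErasure (a :: l) ≠ [] := loopErasure_eq_nil_iff.not.2 (List.cons_ne_nil a l)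
      have hl : l ≠ [] := loopErasure_eq_nil_iff.not.1 (List.ne_nil_of_mem ha)
      rw [loopErasure_cons_of_mem ha] at hne ⊢
      rw [getLast?_eq_of_suffix (List.dropWhile_suffix _) hne, ih,
        List.getLast?_cons_of_ne_nil hl]
    · rw [loopErasure_cons_of_notMem ha, List.getLast?_cons, List.getLast?_cons, ih]

theorem consecutivePairs_loopErasure_sublist (l : List V) :
    (loopErasure l).consecutivePairs.Sublist l.consecutivePairs := by
  induction l with
  | nil => exact List.nil_sublist _
  | cons a l ih =>
    by_cases ha : a ∈ loopErasure l
    · rw [loopErasure_cons_of_mem ha]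
      exact (consecutivePairs_suffix (List.dropWhile_suffix _)).sublist.trans
        (ih.trans (consecutivePairs_sublist_cons a l))
    · rw [loopErasure_cons_of_notMem ha]
      exact consecutivePairs_cons_sublist_cons a (head?_loopErasure l) ih

end LoopErasure

theorem loop_erasure_closed_walk_general {V : Type*} (σs : V) (γ : List V) (hlen : 2 ≤ γ.length)
    (hhead : γ.head? = some σs) (hlast : γ.getLast? = some σs) :
    ∃ γ' : List V, 2 ≤ γ'.length ∧ γ'.head? = some σs ∧ γ'.getLast? = some σs ∧
      γ'.tail.dropLast.Nodup ∧ (∀ x ∈ γ'.tail.dropLast, x ≠ σs) ∧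
      γ'.consecutivePairs.Sublist γ.consecutivePairs := by
  classical
  obtain ⟨l, rfl⟩ := List.head?_eq_some_iff.1 hhead
  have hl : l ≠ [] := by
    rintro rfl
    simp at hlen
  have hne : loopErasure l ≠ [] := loopErasure_eq_nil_iff.not.2 hl
  have hlast' : (loopErasure l).getLast? = some σs := by
    rw [getLast?_loopErasure, ← List.getLast?_cons_of_ne_nil hl, hlast]
  refine ⟨σs :: loopErasure l, Nat.succ_le_succ (List.length_pos_of_ne_nil hne), rfl, ?_,
    (nodup_loopErasure l).sublist (List.dropLast_sublist _), ?_,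
    consecutivePairs_cons_sublist_cons σs (head?_loopErasure l)
      (consecutivePairs_loopErasure_sublist l)⟩
  · rw [List.getLast?_cons_of_ne_nil hne, hlast']
  · rintro x hx rfl
    exact notMem_dropLast_of_nodup (nodup_loopErasure l) hlast' hx

/-- **Loop erasure increases weight for closed walks.** Given edge weights in
`[0,1]` and a closed walk `γ` at `σ*`, there is a simple excursion `γ'` from
`σ*` to `σ*` (pairwise distinct intermediate vertices, all different from `σ*`)
using only consecutive pairs of `γ`, whose weight is at least that of `γ`. -/
theorem loop_erasure_closed_walk {V : Type*} (σs : V) (w : V → V → ℝ)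
    (hw : ∀ u v : V, 0 ≤ w u v ∧ w u v ≤ 1)
    (γ : List V) (hlen : 2 ≤ γ.length)
    (hhead : γ.head? = some σs) (hlast : γ.getLast? = some σs) :
    ∃ γ' : List V, 2 ≤ γ'.length ∧ γ'.head? = some σs ∧ γ'.getLast? = some σs ∧
      γ'.tail.dropLast.Nodup ∧ (∀ x ∈ γ'.tail.dropLast, x ≠ σs) ∧
      (∀ p ∈ γ'.zip γ'.tail, p ∈ γ.zip γ.tail) ∧
      walkWeightR w γ ≤ walkWeightR w γ' := by
  obtain ⟨γ', hlen', hhead', hlast', hnodup, hne, hsub⟩ :=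
    loop_erasure_closed_walk_general σs γ hlen hhead hlast
  exact ⟨γ', hlen', hhead', hlast', hnodup, hne, fun _ hp ↦ hsub.subset hp,
    walkWeightR_le_of_consecutivePairs_sublist hsub fun p _ ↦ hw p.1 p.2⟩
end
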